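/- arXiv:2205.09963 — 5 statements merged into one kernel-verified Lean document; each statement's English description precedes it below -/
import Mathlib

section
/- Let n ≥ 1, let Π be a set, and for each parameter vector ρ ∈ ℝⁿ let u_ρ : Π → ℝ be a function. For ρ ∈ ℝⁿ define the tie-broken strict total order ≺_ρ on {1,…,n} by i ≺_ρ j iff (ρ_i < ρ_j) or (ρ_i = ρ_j and i < j). Assume that whenever ρ, ρ' ∈ ℝⁿ satisfy ≺_ρ = ≺_{ρ'}, one has u_ρ(x) = u_{ρ'}(x) for all x ∈ Π. Then for any pairwise distinct x_1, …, x_N ∈ Π that are pseudo-shattered by the family U = {u_ρ : ρ ∈ ℝⁿ}, it holds that 2^N ≤ n!; in particular the pseudo-dimension of U is at most n·log₂ n. -/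
/-!
Sorting the coordinates of `ρ`, with ties broken by index, gives a permutation of `Fin n` which
determines the tie-broken order, and hence `u ρ`. So the family contains at most `n!` distinct
functions, while shattering `N` points requires `2 ^ N` of them.
-/

open Function
open scoped Nat

section PseudoShattering

variable {Θ X β κ S : Type*} [LE β]

/-- The points `x i` are pseudo-shattered by the family `h θ`: for suitable thresholds `z i`, every
pattern of comparisons is realised by some member of the family. The points are a family
indexed by `κ` rather than a set. -/
def IsPseudoShattered (h : Θ → X → β) (x : κ → X) : Prop :=
  ∃ z : κ → β, ∀ b : κ → Bool, ∃ θ, ∀ i, z i ≤ h θ (x i) ↔ b i = true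

theorem IsPseudoShattered.two_pow_card_le_card [Fintype κ] [Fintype S] {h : Θ → X → β} {x : κ → X}
    {c : Θ → S} (hx : IsPseudoShattered h x) (hc : h.FactorsThrough c) :
    2 ^ Fintype.card κ ≤ Fintype.card S := by
  classical
  obtain ⟨z, hz⟩ := hx
  choose θ hθ using hz
  have c_θ_injective : Injective fun b ↦ c (θ b) := by
    intro b b' hbb'
    funext i
    rw [Bool.eq_iff_iff, ← hθ b i, ← hθ b' i, hc hbb']
  simpa only [Fintype.card_fun, Fintype.card_bool] using
    Fintype.card_le_of_injective _ c_θ_injective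

end PseudoShattering

section TieBrokenOrder

variable {n : ℕ} {ι α : Type*}

/-- The order `i ≺_ρ j` on indices that compares the values of `ρ` and breaks ties by index. -/
def TieBrokenLT [LT ι] [LT α] (ρ : ι → α) (i j : ι) : Prop :=
  ρ i < ρ j ∨ (ρ i = ρ j ∧ i < j)

theorem tieBrokenLT_iff_toLex_lt [LT ι] [LT α] {ρ : ι → α} {i j : ι} :
    TieBrokenLT ρ i j ↔ toLex (ρ i, i) < toLex (ρ j, j) := by
  rw [TieBrokenLT, Prod.Lex.toLex_lt_toLex]

theorem tieBrokenLT_sort_iff [LinearOrder α] (ρ : Fin n → α) {a b : Fin n} :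
    TieBrokenLT ρ (Tuple.sort ρ a) (Tuple.sort ρ b) ↔ a < b :=
  calc
    TieBrokenLT ρ (Tuple.sort ρ a) (Tuple.sort ρ b)
      ↔ Tuple.graphEquiv₁ ρ (Tuple.sort ρ a) < Tuple.graphEquiv₁ ρ (Tuple.sort ρ b) :=
      tieBrokenLT_iff_toLex_lt
    _ ↔ a < b := by
      rw [← Tuple.graphEquiv₂_apply, ← Tuple.graphEquiv₂_apply, OrderIso.lt_iff_lt]

theorem tieBrokenLT_factorsThrough_sort [LinearOrder α] :
    (TieBrokenLT : (Fin n → α) → Fin n → Fin n → Prop).FactorsThrough Tuple.sort := by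
  intro ρ ρ' hsort
  funext i j
  obtain ⟨a, rfl⟩ := (Tuple.sort ρ).surjective i
  obtain ⟨b, rfl⟩ := (Tuple.sort ρ).surjective j
  rw [tieBrokenLT_sort_iff, hsort, tieBrokenLT_sort_iff]

end TieBrokenOrder

theorem natCast_le_mul_logb_of_pow_le_factorial {b : ℝ} {N n : ℕ} (hb : 1 < b)
    (h : b ^ N ≤ n !) : (N : ℝ) ≤ n * Real.logb b n :=
  calc
    (N : ℝ) ≤ Real.logb b n ! :=
      (Real.le_logb_iff_rpow_le hb (by positivity)).2 (by rwa [Real.rpow_natCast])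
    _ ≤ Real.logb b ((n : ℝ) ^ n) :=
      Real.logb_le_logb_of_le hb (by positivity) (mod_cast n.factorial_le_pow)
    _ = n * Real.logb b n := Real.logb_pow b n n

theorem stmt_0_general {n : ℕ} {α β X κ : Type*} [LinearOrder α] [LE β] [Fintype κ]
    {u : (Fin n → α) → X → β} (hu : u.FactorsThrough TieBrokenLT) {x : κ → X}
    (hx : IsPseudoShattered u x) :
    2 ^ Fintype.card κ ≤ n ! ∧ (Fintype.card κ : ℝ) ≤ n * Real.logb 2 n := by
  have u_factorsThrough_sort : u.FactorsThrough Tuple.sort :=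
    fun _ _ hsort ↦ hu (tieBrokenLT_factorsThrough_sort hsort)
  have two_pow_le : 2 ^ Fintype.card κ ≤ n ! := by
    simpa only [Fintype.card_perm, Fintype.card_fin] using
      hx.two_pow_card_le_card u_factorsThrough_sort
  exact ⟨two_pow_le, natCast_le_mul_logb_of_pow_le_factorial one_lt_two (mod_cast two_pow_le)⟩

/-- If GBFS-style utility functions `u ρ` depend on `ρ` only through the
tie-broken strict total order `i ≺_ρ j ↔ ρ i < ρ j ∨ (ρ i = ρ j ∧ i < j)`, then any
pairwise-distinct pseudo-shattered set of size `N` satisfies `2^N ≤ n!`, and hence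
`N ≤ n·log₂ n`. -/
theorem stmt_0 (n : ℕ) (hn : 1 ≤ n) (P : Type*)
    (u : (Fin n → ℝ) → P → ℝ)
    (horder : ∀ ρ ρ' : Fin n → ℝ,
      (∀ i j : Fin n,
        (ρ i < ρ j ∨ (ρ i = ρ j ∧ i < j)) ↔ (ρ' i < ρ' j ∨ (ρ' i = ρ' j ∧ i < j))) →
      ∀ x : P, u ρ x = u ρ' x)
    (N : ℕ) (x : Fin N → P) (hx : Function.Injective x)
    (hshatter : ∃ z : Fin N → ℝ, ∀ b : Fin N → Bool, ∃ ρ : Fin n → ℝ,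
      ∀ i : Fin N, (z i ≤ u ρ (x i) ↔ b i = true)) :
    2 ^ N ≤ Nat.factorial n ∧ (N : ℝ) ≤ (n : ℝ) * Real.logb 2 n := by
  have hu : u.FactorsThrough TieBrokenLT := fun ρ ρ' h ↦
    funext <| horder ρ ρ' fun i j ↦ (congrFun₂ h i j).to_iff
  simpa only [Fintype.card_fin] using stmt_0_general hu hshatter
end

section
/- Let n ≥ 1 and m ≥ 2 be integers, let Π be a set, let G assign to every x ∈ Π a finite subset G(x) ⊆ {1,…,n} × ℝ with |G(x)| ≤ m, and for each ρ ∈ ℝⁿ let u_ρ : Π → ℝ be a function. Assume the following score-order invariance: for every x ∈ Π and every ρ, ρ' ∈ ℝⁿ, if for all (v, g), (v', g') ∈ G(x) one has g + ρ_v ≤ g' + ρ_{v'} ⟺ g + ρ'_v ≤ g' + ρ'_{v'}, then u_ρ(x) = u_{ρ'}(x). Then any pairwise distinct x_1, …, x_N ∈ Π with N ≥ n that are pseudo-shattered by the family U = {u_ρ : ρ ∈ ℝⁿ} satisfy 2^N ≤ 2·(e·N·m²)ⁿ. -/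
/-!
Write the score comparisons as signs of affine functionals of `ρ`. If a set of affine functionals is
shattered by the points of the space, then its linear parts are linearly independent: a relation
`∑ w j • (f j).linear = 0` makes `∑ w j * f j` constant, while at a point where `0 ≤ f j ↔ 0 ≤ w j`
this sum is nonnegative and at a point where `0 ≤ f j ↔ w j ≤ 0` it is nonpositive. So at most
`dim` functionals are shattered, and the Sauer–Shelah lemma bounds the number of sign patterns.
A pseudo-shattered set of size `N` needs `2 ^ N` of them.
-/

open Finset

lemma sum_choose_le_add_one_pow (M d : ℕ) : ∑ k ∈ Iic d, M.choose k ≤ (M + 1) ^ d := by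
  rw [add_pow, ← Nat.range_succ_eq_Iic]
  refine sum_le_sum fun k hk => ?_
  rw [one_pow, mul_one]
  exact (Nat.choose_le_pow M k).trans
    (Nat.le_mul_of_pos_right _ (Nat.choose_pos (Nat.lt_succ_iff.1 (mem_range.1 hk))))

lemma card_sigma_prod_self_le {ι A : Type*} [Fintype ι] {S : ι → Finset A} {m : ℕ}
    (hS : ∀ i, #(S i) ≤ m) : Fintype.card (Σ i, S i × S i) ≤ Fintype.card ι * m ^ 2 := by
  simp only [Fintype.card_sigma, Fintype.card_prod, Fintype.card_coe, ← sq]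
  exact sum_le_card_nsmul _ _ _ fun i _ => Nat.pow_le_pow_left (hS i) 2

lemma add_one_le_exp_one_mul {t : ℝ} (ht : 1 ≤ t) : t + 1 ≤ Real.exp 1 * t := by
  nlinarith [Real.add_one_le_exp 1]

lemma sum_mul_apply_eq_of_sum_smul_linear_eq_zero {K E α : Type*} [CommRing K] [AddCommGroup E]
    [Module K E] {f : α → E →ᵃ[K] K} {s : Finset α} {w : α → K}
    (hw : ∑ j ∈ s, w j • (f j).linear = 0) (ρ ρ' : E) :
    ∑ j ∈ s, w j * f j ρ = ∑ j ∈ s, w j * f j ρ' := by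
  have hlinear (j : α) : (f j).linear (ρ - ρ') = f j ρ - f j ρ' := (f j).linearMap_vsub ρ ρ'
  have hdiff : ∑ j ∈ s, w j * (f j ρ - f j ρ') = 0 := by
    simpa only [LinearMap.sum_apply, LinearMap.smul_apply, hlinear, smul_eq_mul,
      LinearMap.zero_apply] using DFunLike.congr_fun hw (ρ - ρ')
  simpa only [mul_sub, sum_sub_distrib, sub_eq_zero] using hdiff

section SignPatterns

variable {K E α : Type*} [Field K] [LinearOrder K] [AddCommGroup E] [Module K E] [Fintype α]

/-- The sign pattern of a finite family of affine functionals at a point, encoded as the set of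
indices of the functionals that are nonnegative there. -/
def signPattern (f : α → E →ᵃ[K] K) (ρ : E) : Finset α := {j | 0 ≤ f j ρ}

lemma mem_signPattern {f : α → E →ᵃ[K] K} {ρ : E} {j : α} :
    j ∈ signPattern f ρ ↔ 0 ≤ f j ρ := by
  simp [signPattern]

open Classical in
/-- The sign patterns that a finite family of affine functionals realizes. They correspond to
the cells cut out by the hyperplanes `f j = 0`, each hyperplane being attached to its nonnegative
side. -/
noncomputable def signPatterns (f : α → E →ᵃ[K] K) : Finset (Finset α) :=
  {A | ∃ ρ, signPattern f ρ = A}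

lemma mem_signPatterns {f : α → E →ᵃ[K] K} {A : Finset α} :
    A ∈ signPatterns f ↔ ∃ ρ, signPattern f ρ = A := by
  simp [signPatterns]

lemma exists_forall_nonneg_iff_of_shatters [DecidableEq α] {f : α → E →ᵃ[K] K} {s : Finset α}
    (hs : (signPatterns f).Shatters s) (p : α → Prop) :
    ∃ ρ, ∀ j ∈ s, (0 ≤ f j ρ ↔ p j) := by
  classical
  obtain ⟨A, hA, hsA⟩ := hs (filter_subset p s)
  obtain ⟨ρ, rfl⟩ := mem_signPatterns.1 hA
  refine ⟨ρ, fun j hj => ?_⟩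
  simpa [hj, mem_signPattern] using Finset.ext_iff.1 hsA j

variable [IsStrictOrderedRing K]

theorem linearIndepOn_linear_of_shatters [DecidableEq α] {f : α → E →ᵃ[K] K} {s : Finset α}
    (hs : (signPatterns f).Shatters s) :
    LinearIndepOn K (fun j => (f j).linear) (s : Set α) := by
  rw [linearIndepOn_finset_iff]
  intro w hw
  obtain ⟨ρ, hρ⟩ := exists_forall_nonneg_iff_of_shatters hs (0 ≤ w ·)
  obtain ⟨ρ', hρ'⟩ := exists_forall_nonneg_iff_of_shatters hs (w · ≤ 0)
  have hnonneg : ∀ j ∈ s, 0 ≤ w j * f j ρ := fun j hj => by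
    rcases le_or_gt 0 (w j) with hwj | hwj
    · exact mul_nonneg hwj ((hρ j hj).2 hwj)
    · exact mul_nonneg_of_nonpos_of_nonpos hwj.le (le_of_not_ge fun h => hwj.not_ge ((hρ j hj).1 h))
  have hnonpos : ∀ j ∈ s, w j * f j ρ' ≤ 0 := fun j hj => by
    rcases le_or_gt (w j) 0 with hwj | hwj
    · exact mul_nonpos_of_nonpos_of_nonneg hwj ((hρ' j hj).2 hwj)
    · exact mul_nonpos_of_nonneg_of_nonpos hwj.le
        (le_of_not_ge fun h => hwj.not_ge ((hρ' j hj).1 h))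
  have heq := sum_mul_apply_eq_of_sum_smul_linear_eq_zero hw ρ ρ'
  have hzero := (sum_eq_zero_iff_of_nonneg hnonneg).1
    ((heq.trans_le (sum_nonpos hnonpos)).antisymm (sum_nonneg hnonneg))
  have hzero' := (sum_eq_zero_iff_of_nonpos hnonpos).1
    ((sum_nonpos hnonpos).antisymm (heq ▸ sum_nonneg hnonneg))
  intro j hj
  have hw_nonneg : 0 ≤ w j := (mul_eq_zero.1 (hzero j hj)).elim Eq.ge fun h => (hρ j hj).1 h.ge
  have hw_nonpos : w j ≤ 0 := (mul_eq_zero.1 (hzero' j hj)).elim Eq.le fun h => (hρ' j hj).1 h.ge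
  exact hw_nonpos.antisymm hw_nonneg

lemma vcDim_signPatterns_le [DecidableEq α] [FiniteDimensional K E] (f : α → E →ᵃ[K] K) :
    (signPatterns f).vcDim ≤ Module.finrank K E := by
  refine Finset.sup_le fun s hs => ?_
  have hli := linearIndepOn_linear_of_shatters (mem_shatterer.1 hs)
  simpa [Subspace.dual_finrank_eq] using hli.linearIndependent.fintype_card_le_finrank

theorem card_signPatterns_le [FiniteDimensional K E] (f : α → E →ᵃ[K] K) :
    #(signPatterns f) ≤ (Fintype.card α + 1) ^ Module.finrank K E := by
  classical
  calc #(signPatterns f) ≤ #(signPatterns f).shatterer := card_le_card_shatterer _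
    _ ≤ ∑ k ∈ Iic (signPatterns f).vcDim, (Fintype.card α).choose k :=
      card_shatterer_le_sum_vcDim
    _ ≤ (Fintype.card α + 1) ^ (signPatterns f).vcDim := sum_choose_le_add_one_pow _ _
    _ ≤ (Fintype.card α + 1) ^ Module.finrank K E :=
      Nat.pow_le_pow_right (Nat.succ_pos _) (vcDim_signPatterns_le f)

end SignPatterns

section PseudoShatters

variable {Θ ι β γ : Type*} [LE β]

/-- The family of functions `h θ : ι → β` pseudo-shatters its whole domain `ι`: with respect to
suitable thresholds, every pattern of bits is realized by some parameter `θ`. -/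
def PseudoShatters (h : Θ → ι → β) : Prop :=
  ∃ z : ι → β, ∀ b : ι → Bool, ∃ θ, ∀ i, z i ≤ h θ i ↔ b i = true

lemma PseudoShatters.two_pow_card_le [Fintype ι] {h : Θ → ι → β} (hh : PseudoShatters h)
    {π : Θ → γ} (hπ : h.FactorsThrough π) {t : Finset γ} (ht : ∀ θ, π θ ∈ t) :
    2 ^ Fintype.card ι ≤ #t := by
  classical
  obtain ⟨z, hz⟩ := hh
  choose θ hθ using hz
  have hinj : Function.Injective (π ∘ θ) := fun b b' hbb' => funext fun i => by
    rw [Bool.eq_iff_iff, ← hθ b i, ← hθ b' i, hπ hbb']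
  simpa using card_le_card_of_injOn (s := univ) (π ∘ θ) (fun b _ => ht (θ b)) hinj.injOn

end PseudoShatters

section Scores

variable {K V ι P β : Type*} [Field K] [LinearOrder K] [IsStrictOrderedRing K]

/-- The score `g + ρ v` of a pair `(v, g)`, as an affine functional of `ρ`. -/
def score (p : V × K) : (V → K) →ᵃ[K] K :=
  AffineMap.const K (V → K) p.2 + (LinearMap.proj p.1 : (V → K) →ₗ[K] K).toAffineMap

/-- The score difference attached to an index `i` and two pairs of `S i`. Its sign pattern
records the order of the scores within each `S i`. -/
def scoreGap (S : ι → Finset (V × K)) (j : Σ i, S i × S i) : (V → K) →ᵃ[K] K :=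
  score j.2.2.1 - score j.2.1.1

lemma scoreGap_nonneg_iff (S : ι → Finset (V × K)) (i : ι) (p q : S i) (ρ : V → K) :
    0 ≤ scoreGap S ⟨i, p, q⟩ ρ ↔ p.1.2 + ρ p.1.1 ≤ q.1.2 + ρ q.1.1 := by
  simp [scoreGap, score]

theorem stmt_1_general [Fintype V] [Fintype ι] [LE β] {m : ℕ}
    (G : P → Finset (V × K)) (hG : ∀ x, #(G x) ≤ m) (u : (V → K) → P → β)
    (hinv : ∀ x ρ ρ', (∀ p ∈ G x, ∀ q ∈ G x,
      (p.2 + ρ p.1 ≤ q.2 + ρ q.1 ↔ p.2 + ρ' p.1 ≤ q.2 + ρ' q.1)) → u ρ x = u ρ' x)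
    (x : ι → P) (hshatter : PseudoShatters fun ρ i => u ρ (x i)) :
    2 ^ Fintype.card ι ≤ (Fintype.card ι * m ^ 2 + 1) ^ Fintype.card V := by
  classical
  let gap := scoreGap fun i => G (x i)
  have hfactors : (fun ρ i => u ρ (x i)).FactorsThrough (signPattern gap) := by
    refine fun ρ ρ' hρ => funext fun i => hinv (x i) ρ ρ' fun p hp q hq => ?_
    simpa only [gap, mem_signPattern, scoreGap_nonneg_iff] using
      Finset.ext_iff.1 hρ ⟨i, ⟨p, hp⟩, ⟨q, hq⟩⟩
  calc 2 ^ Fintype.card ι ≤ #(signPatterns gap) :=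
        hshatter.two_pow_card_le hfactors fun ρ => mem_signPatterns.2 ⟨ρ, rfl⟩
    _ ≤ (Fintype.card (Σ i, G (x i) × G (x i)) + 1) ^ Fintype.card V := by
        simpa only [Module.finrank_fintype_fun_eq_card] using card_signPatterns_le gap
    _ ≤ (Fintype.card ι * m ^ 2 + 1) ^ Fintype.card V :=
        Nat.pow_le_pow_left (Nat.succ_le_succ (card_sigma_prod_self_le fun i => hG (x i))) _

end Scores

/-- master counting lemma for A*. If `u ρ` depends on `ρ` only through the
order of the scores `g + ρ v` over `(v, g) ∈ G(x)`, where `|G(x)| ≤ m`, then any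
pairwise-distinct pseudo-shattered set of size `N ≥ n` satisfies `2^N ≤ 2·(e·N·m²)ⁿ`. -/
theorem stmt_1 (n m : ℕ) (hn : 1 ≤ n) (hm : 2 ≤ m) (P : Type*)
    (G : P → Finset (Fin n × ℝ)) (hG : ∀ x : P, (G x).card ≤ m)
    (u : (Fin n → ℝ) → P → ℝ)
    (hinv : ∀ (x : P) (ρ ρ' : Fin n → ℝ),
      (∀ vg ∈ G x, ∀ vg' ∈ G x,
        (vg.2 + ρ vg.1 ≤ vg'.2 + ρ vg'.1 ↔ vg.2 + ρ' vg.1 ≤ vg'.2 + ρ' vg'.1)) →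
      u ρ x = u ρ' x)
    (N : ℕ) (hN : n ≤ N) (x : Fin N → P) (hx : Function.Injective x)
    (hshatter : ∃ z : Fin N → ℝ, ∀ b : Fin N → Bool, ∃ ρ : Fin n → ℝ,
      ∀ i : Fin N, (z i ≤ u ρ (x i) ↔ b i = true)) :
    (2 : ℝ) ^ N ≤ 2 * (Real.exp 1 * N * (m : ℝ) ^ 2) ^ n := by
  have hpos : (1 : ℝ) ≤ N * (m : ℝ) ^ 2 :=
    mod_cast Nat.mul_pos (hn.trans hN) (pow_pos (two_pos.trans_le hm) 2)
  have hcount : 2 ^ N ≤ (N * m ^ 2 + 1) ^ n := by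
    simpa only [Fintype.card_fin] using stmt_1_general G hG u hinv x hshatter
  calc (2 : ℝ) ^ N ≤ (N * (m : ℝ) ^ 2 + 1) ^ n := mod_cast hcount
    _ ≤ (Real.exp 1 * (N * (m : ℝ) ^ 2)) ^ n := by gcongr; exact add_one_le_exp_one_mul hpos
    _ = (Real.exp 1 * N * (m : ℝ) ^ 2) ^ n := by rw [mul_assoc]
    _ ≤ 2 * (Real.exp 1 * N * (m : ℝ) ^ 2) ^ n := le_mul_of_one_le_left (by positivity) one_le_two
end

section
/- Let n ≥ 2 and d ≥ 2, and let Π be a set where each x ∈ Π is a path-finding instance consisting of a directed graph on vertex set V = {1,…,n} with edge set E_x ⊆ V×V (no self-loops) in which every vertex has out-degree at most d, edge weights w_x : E_x → ℝ_{≥0}, and a start vertex s_x ∈ V. For x ∈ Π define G(x) = {(v, c) ∈ V × ℝ : c is the cost of some simple directed path from s_x to v in x}. For each ρ ∈ ℝⁿ let u_ρ : Π → ℝ and assume the score-order invariance: for every x ∈ Π and every ρ, ρ' ∈ ℝⁿ, if for all (v, g), (v', g') ∈ G(x) one has g + ρ_v ≤ g' + ρ_{v'} ⟺ g + ρ'_v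 ≤ g' + ρ'_{v'}, then u_ρ(x) = u_{ρ'}(x). Then any pairwise distinct x_1, …, x_N ∈ Π pseudo-shattered by U = {u_ρ : ρ ∈ ℝⁿ} satisfy N ≤ 4n·log₂(2e·n·(n(n−1)d^{n−2})²); in particular the pseudo-dimension of U is O(n² lg d). -/
/-- A simple directed path from `s` to `v` in the graph on `Fin n` with edge set `E`:
a nonempty list of pairwise distinct vertices starting at `s`, ending at `v`, with
consecutive vertices joined by edges. -/
def IsSimplePath (n : ℕ) (E : Finset (Fin n × Fin n)) (s v : Fin n)
    (p : List (Fin n)) : Prop :=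
  p.Nodup ∧ p.head? = some s ∧ p.getLast? = some v ∧
    p.Chain' (fun a b => (a, b) ∈ E)

/-- The cost of a path: the sum of the weights of its consecutive edges. -/
def pathCost (n : ℕ) (w : Fin n × Fin n → ℝ) (p : List (Fin n)) : ℝ :=
  ((p.zip p.tail).map w).sum

/-- The set of pairs `(v, c)` such that `c` is the cost of some simple directed path
from `s` to `v`. -/
def Gset (n : ℕ) (E : Finset (Fin n × Fin n)) (w : Fin n × Fin n → ℝ)
    (s : Fin n) : Set (Fin n × ℝ) :=
  {vc | ∃ p : List (Fin n), IsSimplePath n E s vc.1 p ∧ pathCost n w p = vc.2}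

/-!
Fix instances `x₁, …, x_N`. Whether the score of `(v, g)` is at most that of `(v', g')` is the
half-space condition `ρ v - ρ v' ≤ g' - g` on `ρ`, so `ρ` influences the `u ρ (x i)` only through
which of at most `N * M ^ 2` half-spaces contain it, where `M` bounds the number of pairs in each
`G (x i)`. If every pattern of membership in some half-spaces is realized, then their linear parts
are linearly independent. Hence the realized patterns have VC dimension at most `n`, and
Sauer–Shelah bounds their number by `(N * M ^ 2 + 1) ^ n`. A pseudo-shattered family needs `2 ^ N`
of them, and solving `2 ^ N ≤ (N * M ^ 2 + 1) ^ n` for `N` gives the bound.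
-/

open Finset Module

section PseudoShattering

variable {Θ ι β : Type*} [LE β]

/-- The whole index set `ι` is pseudo-shattered by the functions `h θ : ι → β`: for suitable
thresholds `z`, every bit vector is a vector of threshold outcomes of some `h θ`. A subset of the
domain is encoded by its indexing by `ι`. -/
def PseudoShattered (h : Θ → ι → β) : Prop :=
  ∃ z : ι → β, ∀ b : ι → Bool, ∃ θ, ∀ i, z i ≤ h θ i ↔ b i = true

theorem PseudoShattered.two_pow_card_le [Fintype ι] {h : Θ → ι → β} (hh : PseudoShattered h)
    {α : Type*} {f : Θ → α} {T : Finset α} (hfT : ∀ θ, f θ ∈ T)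
    (hfh : ∀ θ θ', f θ = f θ' → h θ = h θ') : 2 ^ Fintype.card ι ≤ #T := by
  classical
  obtain ⟨z, hz⟩ := hh
  choose θ hθ using hz
  have hinj : Function.Injective (f ∘ θ) := fun b b' hbb' ↦ funext fun i ↦ by
    rw [Bool.eq_iff_iff, ← hθ b i, ← hθ b' i, hfh _ _ hbb']
  calc 2 ^ Fintype.card ι = #(univ : Finset (ι → Bool)) := by simp
    _ ≤ #T := card_le_card_of_injOn (f ∘ θ) (fun b _ ↦ hfT (θ b)) hinj.injOn

end PseudoShattering

theorem sum_choose_le_succ_pow (m n : ℕ) : ∑ k ∈ Iic n, m.choose k ≤ (m + 1) ^ n := by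
  rw [add_pow, ← Nat.range_succ_eq_Iic]
  refine sum_le_sum fun k hk ↦ ?_
  have hkn : 0 < n.choose k := Nat.choose_pos (mem_range_succ_iff.1 hk)
  calc m.choose k ≤ m ^ k := Nat.choose_le_pow m k
    _ ≤ m ^ k * 1 ^ (n - k) * n.choose k := by
      simpa only [one_pow, mul_one] using Nat.le_mul_of_pos_right _ hkn

section HalfspacePatterns

variable {K V ι : Type*} [Field K] [LinearOrder K] [AddCommGroup V] [Module K V]

open scoped Classical in
/-- The membership patterns of points `x` in the half-spaces `{x | L j x ≤ c j}`: the sets of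
indices `j` whose half-space contains some common `x`, no other half-space containing that `x`. -/
noncomputable def halfspacePatterns [Fintype ι] (L : ι → Dual K V) (c : ι → K) :
    Finset (Finset ι) :=
  {S | ∃ x, ∀ j, j ∈ S ↔ L j x ≤ c j}

variable {L : ι → Dual K V} {c : ι → K}

theorem mem_halfspacePatterns [Fintype ι] {S : Finset ι} :
    S ∈ halfspacePatterns L c ↔ ∃ x, ∀ j, j ∈ S ↔ L j x ≤ c j := by
  simp [halfspacePatterns]

variable [IsStrictOrderedRing K]

/- A linear relation `∑ g j • L j = 0` is evaluated at the difference of two points, the first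
lying in exactly the half-spaces with `0 < g j` and the second in exactly those with `g j < 0`:
every summand is then nonpositive, and negative where `g j ≠ 0`. -/
theorem linearIndepOn_of_forall_subset_exists {s : Finset ι}
    (h : ∀ t ⊆ s, ∃ x, ∀ j ∈ s, j ∈ t ↔ L j x ≤ c j) : LinearIndepOn K L (s : Set ι) := by
  refine linearIndepOn_finset_iff.2 fun g hg ↦ ?_
  obtain ⟨x, hx⟩ := h {j ∈ s | 0 < g j} (filter_subset _ _)
  obtain ⟨y, hy⟩ := h {j ∈ s | g j < 0} (filter_subset _ _)
  have hneg : ∀ j ∈ s, g j ≠ 0 → g j * L j (x - y) < 0 := by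
    intro j hj hgj
    have hxj : 0 < g j ↔ L j x ≤ c j := by simpa [hj] using hx j hj
    have hyj : g j < 0 ↔ L j y ≤ c j := by simpa [hj] using hy j hj
    rw [map_sub]
    rcases hgj.lt_or_gt with hlt | hgt
    · have : c j < L j x := not_le.1 (hxj.not.1 hlt.not_gt)
      exact mul_neg_of_neg_of_pos hlt (by linarith [hyj.1 hlt])
    · have : c j < L j y := not_le.1 (hyj.not.1 hgt.not_gt)
      exact mul_neg_of_pos_of_neg hgt (by linarith [hxj.1 hgt])
  have hnonpos : ∀ j ∈ s, g j * L j (x - y) ≤ 0 := fun j hj ↦ by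
    rcases eq_or_ne (g j) 0 with h0 | h0
    · simp [h0]
    · exact (hneg j hj h0).le
  have hsum : ∑ j ∈ s, g j * L j (x - y) = 0 := by
    simpa using LinearMap.congr_fun hg (x - y)
  intro j hj
  by_contra hgj
  exact (hneg j hj hgj).ne ((sum_eq_zero_iff_of_nonpos hnonpos).1 hsum j hj)

variable [Fintype ι]

theorem linearIndepOn_of_shatters_halfspacePatterns [DecidableEq ι] {s : Finset ι}
    (hs : (halfspacePatterns L c).Shatters s) : LinearIndepOn K L (s : Set ι) := by
  refine linearIndepOn_of_forall_subset_exists (c := c) fun t ht ↦ ?_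
  obtain ⟨S, hS, rfl⟩ := hs ht
  obtain ⟨x, hx⟩ := mem_halfspacePatterns.1 hS
  exact ⟨x, fun j hj ↦ by rw [← hx j, mem_inter, and_iff_right hj]⟩

variable [FiniteDimensional K V]

theorem vcDim_halfspacePatterns_le [DecidableEq ι] :
    (halfspacePatterns L c).vcDim ≤ finrank K V := by
  refine Finset.sup_le fun s hs ↦ ?_
  have hL := linearIndepOn_of_shatters_halfspacePatterns (mem_shatterer.1 hs)
  simpa [Subspace.dual_finrank_eq] using LinearIndependent.fintype_card_le_finrank hL

theorem card_halfspacePatterns_le :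
    #(halfspacePatterns L c) ≤ (Fintype.card ι + 1) ^ finrank K V := by
  classical
  calc #(halfspacePatterns L c)
    _ ≤ #(halfspacePatterns L c).shatterer := card_le_card_shatterer _
    _ ≤ ∑ k ∈ Iic (halfspacePatterns L c).vcDim, (Fintype.card ι).choose k :=
      card_shatterer_le_sum_vcDim
    _ ≤ ∑ k ∈ Iic (finrank K V), (Fintype.card ι).choose k :=
      sum_le_sum_of_subset (Iic_subset_Iic.2 vcDim_halfspacePatterns_le)
    _ ≤ _ := sum_choose_le_succ_pow _ _

end HalfspacePatterns

section ScoreOrder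

variable {K V ι : Type*} [Field K] [LinearOrder K]

/-- `ρ` and `ρ'` order the pairs `(v, g) ∈ G` in the same way by the A* score `g + ρ v`. -/
def SameScoreOrder (G : Set (V × K)) (ρ ρ' : V → K) : Prop :=
  ∀ p ∈ G, ∀ q ∈ G, p.2 + ρ p.1 ≤ q.2 + ρ q.1 ↔ p.2 + ρ' p.1 ≤ q.2 + ρ' q.1

variable [Fintype ι]

/-- The score order under `ρ`, as a relation on pairs: for each `i`, those pairs of elements of
`G i` whose first entry has score at most that of the second. -/
def scoreOrder (G : ι → Finset (V × K)) (ρ : V → K) : Finset (Σ i, G i × G i) :=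
  {t | t.2.1.1.2 + ρ t.2.1.1.1 ≤ t.2.2.1.2 + ρ t.2.2.1.1}

theorem sameScoreOrder_of_scoreOrder_eq {G : ι → Finset (V × K)} {ρ ρ' : V → K}
    (h : scoreOrder G ρ = scoreOrder G ρ') (i : ι) : SameScoreOrder (G i : Set (V × K)) ρ ρ' :=
  fun p hp q hq ↦ by
    simpa [scoreOrder] using Finset.ext_iff.1 h ⟨i, ⟨p, hp⟩, ⟨q, hq⟩⟩

variable [IsStrictOrderedRing K]

theorem scoreOrder_mem_halfspacePatterns (G : ι → Finset (V × K)) (ρ : V → K) :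
    scoreOrder G ρ ∈ halfspacePatterns
      (fun t : Σ i, G i × G i ↦
        (.proj t.2.1.1.1 - .proj t.2.2.1.1 : (V → K) →ₗ[K] K))
      (fun t ↦ t.2.2.1.2 - t.2.1.1.2) := by
  refine mem_halfspacePatterns.2 ⟨ρ, fun t ↦ (mem_filter_univ t).trans ?_⟩
  simp only [LinearMap.sub_apply, LinearMap.proj_apply]
  constructor <;> intro h <;> linarith

theorem PseudoShattered.two_pow_card_le_of_sameScoreOrder [Fintype V] {β : Type*} [LE β]
    {h : (V → K) → ι → β} (hh : PseudoShattered h) (G : ι → Finset (V × K))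
    (hinv : ∀ i ρ ρ', SameScoreOrder (G i : Set (V × K)) ρ ρ' → h ρ i = h ρ' i) :
    2 ^ Fintype.card ι ≤ (∑ i, #(G i) ^ 2 + 1) ^ Fintype.card V :=
  calc 2 ^ Fintype.card ι
    _ ≤ _ := hh.two_pow_card_le (scoreOrder_mem_halfspacePatterns G)
      fun ρ ρ' heq ↦ funext fun i ↦ hinv i ρ ρ' (sameScoreOrder_of_scoreOrder_eq heq i)
    _ ≤ (Fintype.card (Σ i, G i × G i) + 1) ^ finrank K (V → K) := card_halfspacePatterns_le
    _ = (∑ i, #(G i) ^ 2 + 1) ^ Fintype.card V := by simp [sq]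

end ScoreOrder

section Walks

variable {α : Type*} [DecidableEq α]

/-- The vertex sequences of the walks with `k` edges from `a`, in the directed graph in which
`R a` is the set of out-neighbours of `a`. -/
def walksFrom (R : α → Finset α) : ℕ → α → Finset (List α)
  | 0, a => {[a]}
  | k + 1, a => (R a).biUnion fun b ↦ (walksFrom R k b).image (a :: ·)

theorem cons_mem_walksFrom {R : α → Finset α} {a : α} {p : List α}
    (h : (a :: p).IsChain (fun b c ↦ c ∈ R b)) : a :: p ∈ walksFrom R p.length a := by
  induction p generalizing a with
  | nil => simp [walksFrom]
  | cons b p ih =>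
    obtain ⟨hab, hbp⟩ := List.isChain_cons_cons.1 h
    exact mem_biUnion.2 ⟨b, hab, mem_image_of_mem _ (ih hbp)⟩

variable {R : α → Finset α} {d : ℕ}

theorem card_walksFrom_le (hR : ∀ a, #(R a) ≤ d) (k : ℕ) (a : α) : #(walksFrom R k a) ≤ d ^ k := by
  induction k generalizing a with
  | zero => simp [walksFrom]
  | succ k ih =>
    calc #(walksFrom R (k + 1) a)
      _ ≤ #(R a) * d ^ k := card_biUnion_le_card_mul _ _ _ fun b _ ↦ card_image_le.trans (ih b)
      _ ≤ d ^ (k + 1) := by rw [pow_succ']; exact Nat.mul_le_mul_right _ (hR a)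

theorem card_walksFrom_succ_le (hR : ∀ a, #(R a) ≤ d) (k : ℕ) (a : α) :
    #(walksFrom R (k + 1) a) ≤ #(R a) * d ^ k :=
  card_biUnion_le_card_mul _ _ _ fun b _ ↦ card_image_le.trans (card_walksFrom_le hR k b)

theorem card_biUnion_range_walksFrom_le (hd : 0 < d) (hR : ∀ a, #(R a) ≤ d) (m : ℕ) (a : α) :
    #((range (m + 2)).biUnion (walksFrom R · a)) ≤ (m + 1) * (#(R a) * d ^ m) + 1 :=
  calc #((range (m + 2)).biUnion (walksFrom R · a))
    _ ≤ ∑ k ∈ range (m + 2), #(walksFrom R k a) := card_biUnion_le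
    _ = ∑ k ∈ range (m + 1), #(walksFrom R (k + 1) a) + 1 := by
      rw [sum_range_succ']; simp [walksFrom]
    _ ≤ ∑ _k ∈ range (m + 1), #(R a) * d ^ m + 1 := by
      gcongr with k hk
      exact (card_walksFrom_succ_le hR k a).trans
        (Nat.mul_le_mul_left _ (Nat.pow_le_pow_right hd (mem_range_succ_iff.1 hk)))
    _ = (m + 1) * (#(R a) * d ^ m) + 1 := by simp

end Walks

section OutNeighbors

variable {V : Type*} [Fintype V] [DecidableEq V] (E : Finset (V × V))

/-- The out-neighbours of `a` other than `a` itself, since a simple path uses no self-loop. -/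
def outNeighbors (a : V) : Finset V :=
  {b ∈ univ.erase a | (a, b) ∈ E}

theorem card_outNeighbors_le_outDegree (a : V) : #(outNeighbors E a) ≤ #{e ∈ E | e.1 = a} :=
  card_le_card_of_injOn (a, ·) (fun b hb ↦ by simpa using (mem_filter.1 hb).2)
    (Prod.mk_right_injective a).injOn

theorem card_outNeighbors_le_card_sub_one (a : V) : #(outNeighbors E a) ≤ Fintype.card V - 1 :=
  (card_filter_le _ _).trans_eq (card_erase_of_mem (mem_univ a))

variable {E}

theorem isChain_mem_outNeighbors {p : List V} (hnodup : p.Nodup)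
    (hp : p.IsChain (fun a b ↦ (a, b) ∈ E)) : p.IsChain (fun a b ↦ b ∈ outNeighbors E a) := by
  have hne : p.IsChain (· ≠ ·) := hnodup.isChain
  rw [List.isChain_iff_getElem] at *
  exact fun i hi ↦ by simpa [outNeighbors] using ⟨(hne i hi).symm, hp i hi⟩

end OutNeighbors

section PathCosts

variable {n : ℕ} {E : Finset (Fin n × Fin n)} {s : Fin n}

theorem IsSimplePath.mem_walksFrom {v : Fin n} {p : List (Fin n)} (hp : IsSimplePath n E s v p) :
    p ∈ (range n).biUnion (walksFrom (outNeighbors E) · s) := by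
  obtain ⟨hnodup, hhead, -, hchain⟩ := hp
  obtain ⟨q, rfl⟩ := List.head?_eq_some_iff.1 hhead
  have hlength : q.length < n := by simpa using hnodup.length_le_card
  exact mem_biUnion.2 ⟨q.length, mem_range.2 hlength,
    cons_mem_walksFrom (isChain_mem_outNeighbors hnodup hchain)⟩

theorem Gset_subset_image_walksFrom (w : Fin n × Fin n → ℝ) :
    Gset n E w s ⊆ (fun p ↦ (p.getLast?.getD s, pathCost n w p)) ''
      ((range n).biUnion (walksFrom (outNeighbors E) · s) : Set (List (Fin n))) := by
  rintro ⟨v, c⟩ ⟨p, hp, hcost⟩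
  exact ⟨p, hp.mem_walksFrom, Prod.ext (by simp [hp.2.2.1]) hcost⟩

theorem Gset_encard_le {d : ℕ} (hn : 2 ≤ n) (hd : 0 < d)
    (hdeg : ∀ a, #{e ∈ E | e.1 = a} ≤ d) (w : Fin n × Fin n → ℝ) (s : Fin n) :
    (Gset n E w s).encard ≤ (n * (n - 1) * d ^ (n - 2) : ℕ) := by
  obtain ⟨m, rfl⟩ := Nat.exists_eq_add_of_le' hn
  have hR a := (card_outNeighbors_le_outDegree E a).trans (hdeg a)
  have hs : #(outNeighbors E s) ≤ m + 1 := by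
    simpa using card_outNeighbors_le_card_sub_one E s
  have hcard : #((range (m + 2)).biUnion (walksFrom (outNeighbors E) · s)) ≤
      (m + 2) * (m + 1) * d ^ m :=
    calc _ ≤ (m + 1) * (#(outNeighbors E s) * d ^ m) + 1 :=
          card_biUnion_range_walksFrom_le hd hR m s
      _ ≤ (m + 1) * ((m + 1) * d ^ m) + (m + 1) * d ^ m := by
          gcongr
          exact Nat.mul_pos m.succ_pos (pow_pos hd m)
      _ = (m + 2) * (m + 1) * d ^ m := by ring
  calc (Gset (m + 2) E w s).encard
    _ ≤ _ := (Set.encard_le_encard (Gset_subset_image_walksFrom w)).trans (Set.encard_image_le _ _)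
    _ ≤ _ := by rw [Set.encard_coe_eq_coe_finsetCard]; exact_mod_cast hcard

end PathCosts

theorem logb_two_le_three_fourths_mul {x : ℝ} (hx : 0 < x) : Real.logb 2 x ≤ 3 / 4 * x := by
  have hlog : Real.log x ≤ x / 2 := by
    have h := Real.log_le_sub_one_of_pos (half_pos hx)
    rw [Real.log_div hx.ne' two_ne_zero] at h
    linarith [Real.log_two_lt_d9]
  rw [Real.logb, div_le_iff₀ (by positivity)]
  calc Real.log x ≤ 3 / 4 * x * (2 / 3) := by linarith
    _ ≤ 3 / 4 * x * Real.log 2 := by gcongr; linarith [Real.log_two_gt_d9]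

theorem le_four_mul_logb_of_two_pow_le {N n : ℕ} {A : ℝ} (hn : 0 < n) (hA : 1 ≤ A)
    (h : (2 : ℝ) ^ N ≤ (N * A + 1) ^ n) :
    (N : ℝ) ≤ 4 * n * Real.logb 2 (2 * Real.exp 1 * n * A) := by
  have hn1 : (1 : ℝ) ≤ n := Nat.one_le_cast.2 hn
  have hnA : 1 ≤ n * A := one_le_mul_of_one_le_of_one_le hn1 hA
  set t : ℝ := N / n + 1 with ht
  have hntN : n * t = N + n := by rw [ht]; field_simp
  have ht0 : 0 < t := by positivity
  have hfactor : N * A + 1 ≤ n * A * t :=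
    calc N * A + 1 ≤ N * A + n * A := by gcongr
      _ = n * A * t := by linear_combination -A * hntN
  have hN : (N : ℝ) ≤ n * Real.logb 2 (N * A + 1) := by
    simpa [Real.logb_pow] using Real.logb_le_logb_of_le one_lt_two (by positivity) h
  have hsplit : Real.logb 2 (N * A + 1) ≤ Real.logb 2 (n * A) + 3 / 4 * t :=
    calc Real.logb 2 (N * A + 1)
      _ ≤ Real.logb 2 (n * A * t) := Real.logb_le_logb_of_le one_lt_two (by positivity) hfactor
      _ = Real.logb 2 (n * A) + Real.logb 2 t := Real.logb_mul (by positivity) ht0.ne'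
      _ ≤ _ := by gcongr; exact logb_two_le_three_fourths_mul ht0
  have hconst : Real.logb 2 (n * A) + 1 ≤ Real.logb 2 (2 * Real.exp 1 * n * A) :=
    calc Real.logb 2 (n * A) + 1
      _ = Real.logb 2 (n * A * 2) := by
        rw [Real.logb_mul (by positivity) two_ne_zero, Real.logb_self_eq_one one_lt_two]
      _ ≤ _ := by
        refine Real.logb_le_logb_of_le one_lt_two (by positivity) ?_
        nlinarith [Real.one_le_exp zero_le_one]
  have habsorb : (N : ℝ) ≤ n * Real.logb 2 (n * A) + 3 / 4 * (N + n) :=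
    calc (N : ℝ) ≤ n * (Real.logb 2 (n * A) + 3 / 4 * t) := hN.trans (by gcongr)
      _ = _ := by linear_combination 3 / 4 * hntN
  have hlinear : (N : ℝ) ≤ 4 * n * (Real.logb 2 (n * A) + 1) := by linarith
  exact hlinear.trans (by gcongr)

theorem stmt_5_general (n d : ℕ) (hn : 2 ≤ n) (hd : 0 < d) (P : Type*)
    (E : P → Finset (Fin n × Fin n))
    (hdeg : ∀ x : P, ∀ u : Fin n, ((E x).filter (fun e => e.1 = u)).card ≤ d)
    (w : P → Fin n × Fin n → ℝ)
    (s : P → Fin n)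
    (u : (Fin n → ℝ) → P → ℝ)
    (hinv : ∀ (x : P) (ρ ρ' : Fin n → ℝ),
      SameScoreOrder (Gset n (E x) (w x) (s x)) ρ ρ' → u ρ x = u ρ' x)
    (N : ℕ) (x : Fin N → P)
    (hshatter : PseudoShattered fun ρ i => u ρ (x i)) :
    (N : ℝ) ≤ 4 * n *
      Real.logb 2 (2 * Real.exp 1 * n *
        ((n : ℝ) * ((n : ℝ) - 1) * (d : ℝ) ^ (n - 2)) ^ 2) := by
  obtain ⟨M, hM⟩ : ∃ M : ℕ, M = n * (n - 1) * d ^ (n - 2) := ⟨_, rfl⟩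
  have hMcast : (M : ℝ) = n * (n - 1) * d ^ (n - 2) := by
    rw [hM]; push_cast [Nat.cast_sub (one_le_two.trans hn)]; rfl
  have hMpos : 1 ≤ M := hM ▸ Nat.mul_pos (Nat.mul_pos (by lia) (by lia)) (pow_pos hd _)
  have hG i : ∃ G : Finset (Fin n × ℝ), G = Gset n (E (x i)) (w (x i)) (s (x i)) ∧ #G ≤ M := by
    have hencard := hM ▸ Gset_encard_le hn hd (hdeg (x i)) (w (x i)) (s (x i))
    lift Gset n (E (x i)) (w (x i)) (s (x i)) to Finset (Fin n × ℝ)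
      using Set.finite_of_encard_le_coe hencard with G
    exact ⟨G, rfl, by simpa using hencard⟩
  choose G hGeq hGcard using hG
  have hcount : 2 ^ N ≤ (N * M ^ 2 + 1) ^ n :=
    calc 2 ^ N ≤ (∑ i, #(G i) ^ 2 + 1) ^ n := by
          simpa using hshatter.two_pow_card_le_of_sameScoreOrder G
            fun i ρ ρ' h ↦ hinv (x i) ρ ρ' (hGeq i ▸ h)
      _ ≤ (∑ _i : Fin N, M ^ 2 + 1) ^ n := by gcongr with i; exact hGcard i
      _ = (N * M ^ 2 + 1) ^ n := by simp
  rw [← hMcast]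
  exact le_four_mul_logb_of_two_pow_le (by lia) (one_le_pow₀ (mod_cast hMpos)) (mod_cast hcount)

/-- pseudo-dimension bound for A* on instances whose graphs have
out-degree at most `d`: any pairwise-distinct pseudo-shattered set of size `N`
satisfies `N ≤ 4n·log₂(2e·n·(n(n-1)d^(n-2))²)`, i.e. `Pdim = O(n² lg d)`. -/
theorem stmt_5 (n d : ℕ) (hn : 2 ≤ n) (hd : 2 ≤ d) (P : Type*)
    (E : P → Finset (Fin n × Fin n))
    (hloop : ∀ x : P, ∀ e ∈ E x, e.1 ≠ e.2)
    (hdeg : ∀ x : P, ∀ u : Fin n, ((E x).filter (fun e => e.1 = u)).card ≤ d)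
    (w : P → Fin n × Fin n → ℝ)
    (hw : ∀ x : P, ∀ e ∈ E x, 0 ≤ w x e)
    (s : P → Fin n)
    (u : (Fin n → ℝ) → P → ℝ)
    (hinv : ∀ (x : P) (ρ ρ' : Fin n → ℝ),
      (∀ vg ∈ Gset n (E x) (w x) (s x), ∀ vg' ∈ Gset n (E x) (w x) (s x),
        (vg.2 + ρ vg.1 ≤ vg'.2 + ρ vg'.1 ↔ vg.2 + ρ' vg.1 ≤ vg'.2 + ρ' vg'.1)) →
      u ρ x = u ρ' x)
    (N : ℕ) (x : Fin N → P) (hx : Function.Injective x)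
    (hshatter : ∃ z : Fin N → ℝ, ∀ b : Fin N → Bool, ∃ ρ : Fin n → ℝ,
      ∀ i : Fin N, (z i ≤ u ρ (x i) ↔ b i = true)) :
    (N : ℝ) ≤ 4 * n *
      Real.logb 2 (2 * Real.exp 1 * n *
        ((n : ℝ) * ((n : ℝ) - 1) * (d : ℝ) ^ (n - 2)) ^ 2) := by
  exact stmt_5_general n d hn (by lia) P E hdeg w s u hinv N x hshatter
end

section
/- Let m ≥ n ≥ 1 be integers and let f_1, …, f_m : ℝⁿ → ℝ be affine functions, f_i(x) = ⟨a_i, x⟩ + b_i with a_i ∈ ℝⁿ and b_i ∈ ℝ. Then the number of distinct sign vectors (sgn(f_1(x)), …, sgn(f_m(x))) ∈ {−1, 0, +1}^m realized as x ranges over ℝⁿ is at most 2·(e·m)ⁿ, where sgn(t) = −1 if t < 0, 0 if t = 0, and +1 if t > 0. -/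
/-! Add the hyperplanes one at a time. A sign vector of the arrangement without `g = 0` splits into
one, two or three sign vectors when `g` is added, according to the signs `g` takes on the
corresponding face. A face on which `g` takes both signs also meets `g = 0`, by the intermediate
value property along a segment. So the faces added by `g` number at most twice the faces induced on
the hyperplane `g = 0`, whose dimension is one less: this is the recursion
`c (d + 1) (m + 1) = c (d + 1) m + 2 * c d m` solved by `c d m = ∑ k ≤ d, m.choose k * 2 ^ k`.
For `1 ≤ m` each of the `d + 1 ≤ e ^ d` summands is at most `2 * m ^ d`, since `2 ^ k ≤ 2 * k!`. -/

section GenericFaceCount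

/-- The number of faces, of all dimensions, of an arrangement of `m` hyperplanes in general position
in dimension `d`. It is the extremal value for the number of sign vectors. -/
def genericFaceCount (d m : ℕ) : ℕ := ∑ k ∈ Finset.range (d + 1), m.choose k * 2 ^ k

theorem one_le_genericFaceCount (d m : ℕ) : 1 ≤ genericFaceCount d m := by
  simp [genericFaceCount, Finset.sum_range_succ']

theorem genericFaceCount_mono_right (d : ℕ) : Monotone (genericFaceCount d) := fun _ _ h =>
  Finset.sum_le_sum fun k _ => Nat.mul_le_mul_right _ (Nat.choose_le_choose k h)

theorem genericFaceCount_succ_succ (d m : ℕ) :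
    genericFaceCount (d + 1) (m + 1) = genericFaceCount (d + 1) m + 2 * genericFaceCount d m := by
  simp only [genericFaceCount, Finset.sum_range_succ' _ (d + 1), Finset.mul_sum,
    Nat.choose_succ_succ, add_mul, Finset.sum_add_distrib, Nat.choose_zero_right, pow_succ',
    mul_left_comm 2]
  ring

theorem two_pow_le_two_mul_factorial (k : ℕ) : 2 ^ k ≤ 2 * k.factorial := by
  cases k with
  | zero => decide
  | succ j =>
    rw [pow_succ', Nat.add_comm j 1]
    simpa using Nat.factorial_mul_pow_le_factorial (m := 1) (n := j)

theorem choose_mul_two_pow_le_two_mul_pow (m k : ℕ) : m.choose k * 2 ^ k ≤ 2 * m ^ k :=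
  calc m.choose k * 2 ^ k
      ≤ m.choose k * (2 * k.factorial) := by gcongr; exact two_pow_le_two_mul_factorial k
    _ = 2 * m.descFactorial k := by rw [Nat.descFactorial_eq_factorial_mul_choose]; ring
    _ ≤ 2 * m ^ k := by gcongr; exact m.descFactorial_le_pow k

theorem genericFaceCount_le_succ_mul_two_mul_pow {m : ℕ} (d : ℕ) (hm : 1 ≤ m) :
    genericFaceCount d m ≤ (d + 1) * (2 * m ^ d) := by
  suffices ∀ k ∈ Finset.range (d + 1), m.choose k * 2 ^ k ≤ 2 * m ^ d by
    simpa [genericFaceCount] using Finset.sum_le_card_nsmul _ _ _ this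
  intro k hk
  have hkd : k ≤ d := Finset.mem_range_succ_iff.mp hk
  calc m.choose k * 2 ^ k ≤ 2 * m ^ k := choose_mul_two_pow_le_two_mul_pow m k
    _ ≤ 2 * m ^ d := by gcongr

theorem genericFaceCount_le_two_mul_exp_mul_pow {m : ℕ} (d : ℕ) (hm : 1 ≤ m) :
    (genericFaceCount d m : ℝ) ≤ 2 * (Real.exp 1 * m) ^ d :=
  calc (genericFaceCount d m : ℝ)
      ≤ (d + 1) * (2 * m ^ d) := mod_cast genericFaceCount_le_succ_mul_two_mul_pow d hm
    _ ≤ Real.exp d * (2 * m ^ d) := by gcongr; exact Real.add_one_le_exp _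
    _ = 2 * (Real.exp 1 * m) ^ d := by rw [mul_pow, Real.exp_one_pow]; ring

end GenericFaceCount

section SignVectors

variable {ι X R : Type*} [Zero R] [LinearOrder R]

/-- The sign vectors of the family `f` realized by points of `S`. -/
def signVectors (f : ι → X → R) (S : Set X) : Set (ι → SignType) :=
  (fun x i => SignType.sign (f i x)) '' S

theorem signVectors_mono (f : ι → X → R) {S T : Set X} (h : S ⊆ T) :
    signVectors f S ⊆ signVectors f T :=
  Set.image_mono h

theorem signVectors_union (f : ι → X → R) (S T : Set X) :
    signVectors f (S ∪ T) = signVectors f S ∪ signVectors f T :=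
  Set.image_union ..

theorem ncard_signVectors_le_of_sign_eq [Finite ι] (f : ι → X → R) (i₀ : ι) {S : Set X}
    {σ : SignType} (hσ : ∀ x ∈ S, SignType.sign (f i₀ x) = σ) :
    (signVectors f S).ncard ≤ (signVectors (fun i : {i // i ≠ i₀} => f i) S).ncard := by
  refine Set.ncard_le_ncard_of_injOn (fun s i => s i) ?_ ?_ (Set.toFinite _)
  · rintro _ ⟨x, hx, rfl⟩
    exact ⟨x, hx, rfl⟩
  · rintro _ ⟨x, hx, rfl⟩ _ ⟨y, hy, rfl⟩ hxy
    funext i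
    by_cases hi : i = i₀
    · exact hi ▸ (hσ x hx).trans (hσ y hy).symm
    · exact congrFun hxy ⟨i, hi⟩

theorem ncard_signVectors_le_pos_add_neg_add_zero [Finite ι] (f : ι → X → R) (g : X → R)
    (S : Set X) :
    (signVectors f S).ncard ≤ (signVectors f (S ∩ {x | 0 < g x})).ncard
      + (signVectors f (S ∩ {x | g x < 0})).ncard
      + (signVectors f (S ∩ {x | g x = 0})).ncard := by
  have hS : S = S ∩ {x | 0 < g x} ∪ S ∩ {x | g x < 0} ∪ S ∩ {x | g x = 0} := by
    ext x
    have := lt_trichotomy (g x) 0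
    simp only [Set.mem_union, Set.mem_inter_iff, Set.mem_ofPred_eq]
    tauto
  conv_lhs => rw [hS, signVectors_union, signVectors_union]
  exact (Set.ncard_union_le _ _).trans (Nat.add_le_add_right (Set.ncard_union_le _ _) _)

end SignVectors

theorem signType_coe_injective {R : Type*} [Ring R] [CharZero R] :
    Function.Injective ((↑) : SignType → R) := by
  have one_ne_neg_one : (1 : R) ≠ -1 := fun h =>
    two_ne_zero (one_add_one_eq_two (R := R) ▸ eq_neg_iff_add_eq_zero.mp h)
  intro s t
  cases s <;> cases t <;> simp [one_ne_neg_one, one_ne_neg_one.symm]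

theorem real_sign_eq_coe_sign (t : ℝ) : Real.sign t = ((SignType.sign t : SignType) : ℝ) := by
  obtain ht | rfl | ht := lt_trichotomy t 0
  · simp [Real.sign_of_neg ht, sign_neg ht]
  · simp
  · simp [Real.sign_of_pos ht, sign_pos ht]

theorem ncard_setOf_real_sign_eq {ι X : Type*} (f : ι → X → ℝ) :
    {sv : ι → ℝ | ∃ x, ∀ i, sv i = Real.sign (f i x)}.ncard
      = (signVectors f Set.univ).ncard := by
  rw [← Set.ncard_image_of_injective _ (signType_coe_injective (R := ℝ)).comp_left]
  congr 1
  ext sv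
  simp only [signVectors, Set.image_image, Set.mem_image, Set.mem_univ, true_and,
    Set.mem_ofPred_eq, real_sign_eq_coe_sign, funext_iff, Function.comp_apply, eq_comm]

section AffineZeroLocus

variable {k V P : Type*} [DivisionRing k] [AddCommGroup V] [Module k V] [AddTorsor V P]

/-- The affine subspace `{x | g x = 0}`: a hyperplane, or `⊤` or `⊥` when `g` is constant. -/
def affineZeroLocus (g : P →ᵃ[k] k) : AffineSubspace k P :=
  (affineSpan k {0}).comap g

theorem coe_inf_affineZeroLocus (S : AffineSubspace k P) (g : P →ᵃ[k] k) :
    (↑(S ⊓ affineZeroLocus g) : Set P) = ↑S ∩ {x | g x = 0} := by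
  ext x
  simp [affineZeroLocus, AffineSubspace.mem_inf_iff, AffineSubspace.mem_comap]

theorem finrank_direction_inf_affineZeroLocus_lt {S : AffineSubspace k P}
    [FiniteDimensional k S.direction] {g : P →ᵃ[k] k}
    (hne : ((S ⊓ affineZeroLocus g : AffineSubspace k P) : Set P).Nonempty)
    (hg : ∃ x ∈ S, g x ≠ 0) :
    Module.finrank k (S ⊓ affineZeroLocus g).direction < Module.finrank k S.direction := by
  obtain ⟨x, hxS, hgx⟩ := hg
  refine Submodule.finrank_lt_finrank_of_lt (AffineSubspace.direction_lt_of_nonempty ?_ hne)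
  refine inf_le_left.lt_of_ne fun h => hgx ?_
  have hx : x ∈ ((S ⊓ affineZeroLocus g : AffineSubspace k P) : Set P) := h.symm ▸ hxS
  rw [coe_inf_affineZeroLocus] at hx
  exact hx.2

end AffineZeroLocus

section LinearOrderedField

variable {k : Type*} [Field k] [LinearOrder k] [IsStrictOrderedRing k]

theorem sign_lineMap_of_sign_eq {u v t : k} (ht : t ∈ Set.Icc 0 1)
    (h : SignType.sign u = SignType.sign v) :
    SignType.sign (AffineMap.lineMap u v t) = SignType.sign u := by
  obtain hu | rfl | hu := lt_trichotomy u 0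
  · have hv : v < 0 := sign_eq_neg_one_iff.mp (h ▸ sign_neg hu)
    rw [sign_neg hu, sign_neg ((convex_Iio (0 : k)).lineMap_mem hu hv ht)]
  · have hv : v = 0 := sign_eq_zero_iff.mp (h ▸ sign_zero)
    rw [hv, AffineMap.lineMap_same_apply]
  · have hv : 0 < v := sign_eq_one_iff.mp (h ▸ sign_pos hu)
    rw [sign_pos hu, sign_pos ((convex_Ioi (0 : k)).lineMap_mem hu hv ht)]

theorem exists_lineMap_eq_zero {u v : k} (hu : u ≤ 0) (hv : 0 ≤ v) :
    ∃ t ∈ Set.Icc (0 : k) 1, AffineMap.lineMap u v t = 0 := by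
  have hmem : (0 : k) ∈ segment k u v := Icc_subset_segment ⟨hu, hv⟩
  rwa [segment_eq_image_lineMap] at hmem

variable {V P ι : Type*} [AddCommGroup V] [Module k V] [AddTorsor V P]

theorem signVectors_pos_inter_signVectors_neg_subset (f : ι → P →ᵃ[k] k) (g : P →ᵃ[k] k)
    (S : AffineSubspace k P) :
    signVectors (fun i => f i) (S ∩ {x | 0 < g x}) ∩ signVectors (fun i => f i) (S ∩ {x | g x < 0})
      ⊆ signVectors (fun i => f i) (S ∩ {x | g x = 0}) := by
  rintro s ⟨⟨y, ⟨hyS, hgy⟩, rfl⟩, ⟨x, ⟨hxS, hgx⟩, hxy⟩⟩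
  obtain ⟨t, ht, hgt⟩ := exists_lineMap_eq_zero (le_of_lt hgx) (le_of_lt hgy)
  refine ⟨AffineMap.lineMap x y t, ⟨AffineMap.lineMap_mem t hxS hyS, ?_⟩, ?_⟩
  · rwa [Set.mem_ofPred_eq, AffineMap.apply_lineMap]
  · rw [← hxy]
    funext i
    simpa only [AffineMap.apply_lineMap] using sign_lineMap_of_sign_eq ht (congrFun hxy i)

theorem ncard_signVectors_le_add_two_mul [Finite ι] (f : ι → P →ᵃ[k] k) (i₀ : ι)
    (S : AffineSubspace k P) :
    (signVectors (fun i => f i) (S : Set P)).ncard ≤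
      (signVectors (fun i : {i // i ≠ i₀} => f i) (S : Set P)).ncard
        + 2 * (signVectors (fun i : {i // i ≠ i₀} => f i) (S ∩ {x | f i₀ x = 0})).ncard := by
  set deleted : {i // i ≠ i₀} → P → k := fun i => f i
  set pos : Set P := S ∩ {x | 0 < f i₀ x}
  set neg : Set P := S ∩ {x | f i₀ x < 0}
  set zero : Set P := S ∩ {x | f i₀ x = 0}
  have hunion : signVectors deleted pos ∪ signVectors deleted neg ⊆ signVectors deleted S :=
    Set.union_subset (signVectors_mono _ Set.inter_subset_left)
      (signVectors_mono _ Set.inter_subset_left)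
  have hinter : signVectors deleted pos ∩ signVectors deleted neg ⊆ signVectors deleted zero :=
    signVectors_pos_inter_signVectors_neg_subset (fun i : {i // i ≠ i₀} => f i) (f i₀) S
  calc (signVectors (fun i => f i) (S : Set P)).ncard
      ≤ (signVectors (fun i => f i) pos).ncard + (signVectors (fun i => f i) neg).ncard
          + (signVectors (fun i => f i) zero).ncard :=
        ncard_signVectors_le_pos_add_neg_add_zero _ (f i₀) _
    _ ≤ (signVectors deleted pos).ncard + (signVectors deleted neg).ncard
          + (signVectors deleted zero).ncard := by
        gcongr
        · exact ncard_signVectors_le_of_sign_eq _ i₀ fun x hx => sign_pos hx.2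
        · exact ncard_signVectors_le_of_sign_eq _ i₀ fun x hx => sign_neg hx.2
        · exact ncard_signVectors_le_of_sign_eq _ i₀ fun x hx => sign_eq_zero_iff.mpr hx.2
    _ = (signVectors deleted pos ∪ signVectors deleted neg).ncard
          + (signVectors deleted pos ∩ signVectors deleted neg).ncard
          + (signVectors deleted zero).ncard := by
        rw [Set.ncard_union_add_ncard_inter]
    _ ≤ (signVectors deleted S).ncard + (signVectors deleted zero).ncard
          + (signVectors deleted zero).ncard := by
        gcongr <;> exact Set.toFinite _
    _ = (signVectors deleted S).ncard + 2 * (signVectors deleted zero).ncard := by ring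

theorem ncard_signVectors_le_genericFaceCount [FiniteDimensional k V] [Finite ι]
    (f : ι → P →ᵃ[k] k) {d : ℕ} {S : AffineSubspace k P} (hd : Module.finrank k S.direction ≤ d) :
    (signVectors (fun i => f i) (S : Set P)).ncard ≤ genericFaceCount d (Nat.card ι) := by
  induction hm : Nat.card ι generalizing ι d S with
  | zero =>
    have : IsEmpty ι := Finite.card_eq_zero_iff.mp hm
    exact (Set.ncard_le_one_of_subsingleton _).trans (one_le_genericFaceCount d 0)
  | succ m ih =>
    classical
    obtain ⟨i₀⟩ : Nonempty ι := (Nat.card_pos_iff.mp (hm ▸ m.succ_pos)).1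
    have hcard : Nat.card {i // i ≠ i₀} = m := by
      rw [← Nat.card_congr (Equiv.optionSubtypeNe i₀), Finite.card_option] at hm
      exact Nat.succ_injective hm
    have hdeleted := ih (fun i : {i // i ≠ i₀} => f i) hd hcard
    have hmono := genericFaceCount_mono_right d m.le_succ
    by_cases hvanish : ∀ x ∈ S, f i₀ x = 0
    · have hsign : ∀ x ∈ (S : Set P), SignType.sign (f i₀ x) = 0 :=
        fun x hx => sign_eq_zero_iff.mpr (hvanish x hx)
      exact (ncard_signVectors_le_of_sign_eq _ i₀ hsign).trans (hdeleted.trans hmono)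
    push Not at hvanish
    have hrec := ncard_signVectors_le_add_two_mul f i₀ S
    rw [← coe_inf_affineZeroLocus] at hrec
    obtain hempty | hne := (↑(S ⊓ affineZeroLocus (f i₀)) : Set P).eq_empty_or_nonempty
    · simp only [hempty, signVectors, Set.image_empty, Set.ncard_empty, mul_zero, add_zero] at hrec
      exact hrec.trans (hdeleted.trans hmono)
    · have hlt := finrank_direction_inf_affineZeroLocus_lt hne hvanish
      obtain ⟨d, rfl⟩ := Nat.exists_eq_add_one_of_ne_zero (by omega : d ≠ 0)
      have hrestricted :=
        ih (fun i : {i // i ≠ i₀} => f i) (Nat.le_of_lt_succ (hlt.trans_le hd)) hcard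
      rw [genericFaceCount_succ_succ]
      omega

theorem stmt_8_general [FiniteDimensional k V] [Finite ι] [Nonempty ι] (f : ι → P →ᵃ[k] k) :
    ((signVectors (fun i => f i) Set.univ).ncard : ℝ)
      ≤ 2 * (Real.exp 1 * Nat.card ι) ^ Module.finrank k V := by
  have hdim : Module.finrank k (⊤ : AffineSubspace k P).direction ≤ Module.finrank k V :=
    Submodule.finrank_le _
  exact (Nat.cast_le.mpr (ncard_signVectors_le_genericFaceCount f hdim)).trans
    (genericFaceCount_le_two_mul_exp_mul_pow _ Nat.card_pos)

end LinearOrderedField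

/-- `m ≥ n ≥ 1` affine functions on `ℝⁿ` realize at most `2·(e·m)ⁿ`
distinct sign vectors in `{-1, 0, +1}^m` (the faces of a hyperplane arrangement). -/
theorem stmt_8 (n m : ℕ) (hn : 1 ≤ n) (hnm : n ≤ m)
    (a : Fin m → Fin n → ℝ) (b : Fin m → ℝ) :
    ({sv : Fin m → ℝ | ∃ x : Fin n → ℝ,
        ∀ i : Fin m, sv i = Real.sign (∑ j, a i j * x j + b i)}.ncard : ℝ)
      ≤ 2 * (Real.exp 1 * m) ^ n := by
  have : Nonempty (Fin m) := Fin.pos_iff_nonempty.mp (hn.trans hnm)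
  have hbound := stmt_8_general fun i =>
    (dotProductBilin ℝ ℝ (a i)).toAffineMap + AffineMap.const ℝ (Fin n → ℝ) (b i)
  rwa [← ncard_setOf_real_sign_eq, Nat.card_fin, Module.finrank_fin_fun] at hbound
end

section
/- Let n ≥ 3, let V = {1,…,n}, and consider the complete directed graph on V, i.e., E = {(u, u') ∈ V×V : u ≠ u'}, with an injective labeling i : E → {1, …, n(n−1)} and edge weights w_e = 2^{i(e)−1}. Then for any s, v ∈ V: (a) any two distinct simple directed paths from s to v have different costs; and (b) if v ≠ s, the number of distinct costs of simple directed paths from s to v is at least (n−2)!. -/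
/-! A simple path does not repeat an edge, so when all subsets of edges have distinct total weights
(as they do for distinct powers of `2`, by uniqueness of binary expansions) its cost determines its
edge set. The edge set in turn determines the path, because following the unique outgoing edge
from `s` reads off the vertices in order. Hence there are as many costs as simple paths, and in a
complete digraph the paths through all vertices already account for the `(n - 2)!` orderings of the
intermediate vertices. -/

section PathEdges

variable {α : Type*} {p q : List α}

/-- The edges traversed by the vertex sequence `p`, i.e. its pairs of consecutive vertices, in
order. The cost of a path is the sum of the weights over this list. -/
def pathEdges (p : List α) : List (α × α) :=
  p.zip p.tail

@[simp]
lemma pathEdges_cons_cons (a b : α) (p : List α) :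
    pathEdges (a :: b :: p) = (a, b) :: pathEdges (b :: p) :=
  rfl

lemma fst_mem_of_mem_pathEdges {e : α × α} (he : e ∈ pathEdges p) : e.1 ∈ p :=
  (List.of_mem_zip he).1

lemma nodup_pathEdges (hp : p.Nodup) : (pathEdges p).Nodup := by
  refine .of_map Prod.snd ?_
  rw [pathEdges, List.map_snd_zip (by simp)]
  exact hp.tail

lemma forall_mem_pathEdges_of_isChain {R : α → α → Prop} (hp : p.IsChain R) :
    ∀ e ∈ pathEdges p, R e.1 e.2 := by
  induction hp with
  | nil | singleton => simp [pathEdges]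
  | cons_cons hab _ ih => simpa using ⟨hab, by simpa using ih⟩

lemma isPrefix_of_pathEdges_subset (hp : p.Nodup) (hq : q.Nodup) (hhead : p.head? = q.head?)
    (hsub : pathEdges p ⊆ pathEdges q) : p <+: q := by
  induction p generalizing q with
  | nil => exact List.nil_prefix
  | cons s p ih =>
    obtain ⟨q, rfl⟩ : ∃ q', q = s :: q' := List.head?_eq_some_iff.1 hhead.symm
    obtain ⟨hsp, hp⟩ := List.nodup_cons.1 hp
    obtain ⟨hsq, hq⟩ := List.nodup_cons.1 hq
    match p, q with
    | [], _ => simp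
    | a :: p, [] => simp [pathEdges] at hsub
    | a :: p, b :: q =>
      simp only [pathEdges_cons_cons, List.cons_subset, List.mem_cons, Prod.mk.injEq] at hsub
      obtain ⟨hsa, hsub⟩ := hsub
      obtain rfl : a = b := by
        rcases hsa with ⟨-, hab⟩ | hsa
        · exact hab
        · exact absurd (fst_mem_of_mem_pathEdges hsa) hsq
      have hsub' : pathEdges (a :: p) ⊆ pathEdges (a :: q) := by
        intro e he
        refine (List.mem_cons.1 (hsub he)).resolve_left ?_
        rintro rfl
        exact hsp (fst_mem_of_mem_pathEdges he)
      exact List.cons_prefix_cons.2 ⟨rfl, ih hp hq rfl hsub'⟩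

lemma eq_of_mem_pathEdges_iff (hp : p.Nodup) (hq : q.Nodup) (hhead : p.head? = q.head?)
    (hedges : ∀ e, e ∈ pathEdges p ↔ e ∈ pathEdges q) : p = q := by
  have hpq := isPrefix_of_pathEdges_subset hp hq hhead fun e => (hedges e).1
  have hqp := isPrefix_of_pathEdges_subset hq hp hhead.symm fun e => (hedges e).2
  exact hpq.eq_of_length_le hqp.length_le

end PathEdges

section DistinctSubsetSums

variable {ι M R : Type*} {E : Finset ι}

/-- The family of weights `w i`, `i ∈ E`, has distinct subset sums: a subset of `E` is determined by
its total weight. -/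
def HasDistinctSubsetSums [AddCommMonoid M] (E : Finset ι) (w : ι → M) : Prop :=
  Set.InjOn (fun A : Finset ι => ∑ i ∈ A, w i) {A | A ⊆ E}

lemma hasDistinctSubsetSums_of_eq_pow [Semiring R] [CharZero R] {b : ℕ} (hb : 2 ≤ b)
    {w : ι → R} {k : ι → ℕ} (hk : Set.InjOn k E) (hw : ∀ i ∈ E, w i = (b : R) ^ k i) :
    HasDistinctSubsetSums E w := by
  have sum_eq : ∀ A ⊆ E, ∑ i ∈ A, w i = ((∑ j ∈ A.image k, b ^ j : ℕ) : R) := by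
    intro A hA
    rw [Finset.sum_image (hk.mono hA)]
    push_cast
    exact Finset.sum_congr rfl fun i hi => hw i (hA hi)
  intro A hA B hB hAB
  have himage : A.image k = B.image k := by
    refine Finset.geomSum_injective hb (Nat.cast_injective (R := R) ?_)
    rw [← sum_eq A hA, ← sum_eq B hB]
    exact hAB
  exact Finset.image_injOn_powerset_of_injOn hk (by simpa using hA) (by simpa using hB) himage

end DistinctSubsetSums

section SimplePaths

open scoped Nat

variable {n : ℕ} {E : Finset (Fin n × Fin n)} {w : Fin n × Fin n → ℝ} {s v : Fin n}

lemma IsSimplePath.pathEdges_subset {p : List (Fin n)} (hp : IsSimplePath n E s v p) :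
    (pathEdges p).toFinset ⊆ E := fun e he =>
  forall_mem_pathEdges_of_isChain hp.2.2.2 e (List.mem_toFinset.1 he)

lemma IsSimplePath.pathCost_eq_sum {p : List (Fin n)} (hp : IsSimplePath n E s v p) :
    pathCost n w p = ∑ e ∈ (pathEdges p).toFinset, w e :=
  (List.sum_toFinset w (nodup_pathEdges hp.1)).symm

lemma injOn_pathCost (hw : HasDistinctSubsetSums E w) (s v : Fin n) :
    Set.InjOn (pathCost n w) {p | IsSimplePath n E s v p} := by
  intro p hp q hq hcost
  have hedges : (pathEdges p).toFinset = (pathEdges q).toFinset := by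
    refine hw hp.pathEdges_subset hq.pathEdges_subset ?_
    simpa only [hp.pathCost_eq_sum, hq.pathCost_eq_sum] using hcost
  exact eq_of_mem_pathEdges_iff hp.1 hq.1 (hp.2.1.trans hq.2.1.symm)
    fun e => by simpa only [List.mem_toFinset] using Finset.ext_iff.1 hedges e

lemma finite_setOf_isSimplePath (E : Finset (Fin n × Fin n)) (s v : Fin n) :
    {p | IsSimplePath n E s v p}.Finite :=
  (List.finite_length_le (Fin n) n).subset fun _ hp => by simpa using hp.1.length_le_card

lemma isSimplePath_cons_append_singleton (hE : ∀ a b, a ≠ b → (a, b) ∈ E) {m : List (Fin n)}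
    (hnodup : (s :: (m ++ [v])).Nodup) : IsSimplePath n E s v (s :: (m ++ [v])) :=
  ⟨hnodup, rfl, by rw [← List.cons_append, List.getLast?_concat],
    (hnodup.imp (hE _ _)).isChain⟩

lemma factorial_le_ncard_setOf_isSimplePath (hE : ∀ a b, a ≠ b → (a, b) ∈ E) (hvs : v ≠ s) :
    (n - 2)! ≤ {p | IsSimplePath n E s v p}.ncard := by
  set L : List (Fin n) := ((Finset.univ.erase s).erase v).toList
  have hL : L.Nodup := Finset.nodup_toList _
  have hlength : L.length = n - 2 := by
    simp [L, hvs, Nat.sub_sub]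
  have hpath : ∀ m ∈ L.permutations, IsSimplePath n E s v (s :: (m ++ [v])) := by
    intro m hm
    have hperm : m.Perm L := List.mem_permutations.1 hm
    refine isSimplePath_cons_append_singleton hE ?_
    have hsm : s ∉ m := by simp [hperm.mem_iff, L]
    have hvm : v ∉ m := by simp [hperm.mem_iff, L]
    simp [List.nodup_append', hsm, hvm, hvs.symm, hperm.nodup_iff.2 hL]
  calc (n - 2)! = (L.permutations.toFinset : Set (List (Fin n))).ncard := by
        rw [Set.ncard_coe_finset, List.toFinset_card_of_nodup (List.nodup_permutations L hL),
          List.length_permutations, hlength]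
    _ ≤ {p | IsSimplePath n E s v p}.ncard :=
        Set.ncard_le_ncard_of_injOn (fun m => s :: (m ++ [v]))
          (fun m hm => hpath m (by simpa using hm)) (fun _ _ _ _ h => by simpa using h)
          (finite_setOf_isSimplePath E s v)

theorem stmt_14_general (hw : HasDistinctSubsetSums E w) (s v : Fin n) :
    Set.InjOn (pathCost n w) {p | IsSimplePath n E s v p} ∧
      ((∀ a b, a ≠ b → (a, b) ∈ E) → v ≠ s →
        (n - 2)! ≤ (pathCost n w '' {p | IsSimplePath n E s v p}).ncard) := by
  refine ⟨injOn_pathCost hw s v, fun hE hvs => ?_⟩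
  rw [(injOn_pathCost hw s v).ncard_image]
  exact factorial_le_ncard_setOf_isSimplePath hE hvs

end SimplePaths

/-- paper's Example 3.1: on the complete directed graph on `n ≥ 3`
vertices with edge weights `2^(i(e)−1)` for an injective labeling
`i : E → {1, …, n(n−1)}`: (a) distinct simple `s`–`v` paths have distinct costs,
and (b) for `v ≠ s` the number of distinct costs of simple `s`–`v` paths is at
least `(n−2)!`. -/
theorem stmt_14 (n : ℕ) (hn : 3 ≤ n)
    (E : Finset (Fin n × Fin n))
    (hE : E = Finset.univ.filter (fun e : Fin n × Fin n => e.1 ≠ e.2))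
    (lab : Fin n × Fin n → ℕ)
    (hlab_range : ∀ e ∈ E, 1 ≤ lab e ∧ lab e ≤ n * (n - 1))
    (hlab_inj : ∀ e ∈ E, ∀ e' ∈ E, lab e = lab e' → e = e')
    (w : Fin n × Fin n → ℝ)
    (hwdef : ∀ e ∈ E, w e = (2 : ℝ) ^ (lab e - 1))
    (s v : Fin n) :
    (∀ p q : List (Fin n), IsSimplePath n E s v p → IsSimplePath n E s v q →
      pathCost n w p = pathCost n w q → p = q) ∧
    (v ≠ s →
      Nat.factorial (n - 2) ≤
        {c : ℝ | ∃ p : List (Fin n),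
          IsSimplePath n E s v p ∧ pathCost n w p = c}.ncard) := by
  have hexp : Set.InjOn (fun e => lab e - 1) E := fun e he e' he' h =>
    hlab_inj e he e' he' (Nat.sub_one_cancel (hlab_range e he).1 (hlab_range e' he').1 h)
  have hw : HasDistinctSubsetSums E w :=
    hasDistinctSubsetSums_of_eq_pow le_rfl hexp (by simpa using hwdef)
  obtain ⟨hinj, hcount⟩ := stmt_14_general hw s v
  exact ⟨fun p q hp hq => hinj hp hq, hcount (by simp [hE])⟩
end
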